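/- arXiv:2306.02721 — 2 statements merged into one kernel-verified Lean document; each statement's English description precedes it below -/
import Mathlib

section
/- For every positive integer t and every even positive integer ℓ there exists a constant k̄_{t,ℓ} such that the following holds: for every finite group N, every group homomorphism φ : Z_2 → Aut(N), and every subset S of G = N ⋊_φ Z_2 of even size k > k̄_{t,ℓ} and type (k/2, k/2), the set S contains a subset T of type (ℓ/2, ℓ/2) such that no nonempty subset of T of size h ≤ t admits an alternating parity ordering of its elements whose sum is the identity (0,0). -/
abbrev Z2 : Type := Multiplicative (ZMod 2)

/-- The partial-sums condition for a `t`-weak sequencing of the list `l`. -/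
def WeakSeqList {G : Type*} [Group G] (t : ℕ) (l : List G) : Prop :=
  ∀ i j : ℕ, i < j → j ≤ l.length → j - i ≤ t →
    (l.take i).prod ≠ (l.take j).prod

/-- `l` is an ordering of the finite set `S`. -/
def IsOrderingOf {G : Type*} [Group G] (l : List G) (S : Finset G) : Prop :=
  l.Nodup ∧ ∀ x, x ∈ l ↔ x ∈ S

/-- Consecutive elements of `l` alternate between even and odd. -/
def AltList {N : Type*} [Group N] {φ : Z2 →* MulAut N}
    (l : List (N ⋊[φ] Z2)) : Prop :=
  l.Chain' (fun a b => a.right ≠ b.right)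

/-- Number of even elements of `S`. -/
def evenCount {N : Type*} [Group N] {φ : Z2 →* MulAut N}
    (S : Finset (N ⋊[φ] Z2)) : ℕ :=
  (S.filter (fun g => g.right = 1)).card

/-- `S` has type `(a, b)`. -/
def HasType {N : Type*} [Group N] {φ : Z2 →* MulAut N}
    (S : Finset (N ⋊[φ] Z2)) (a b : ℕ) : Prop :=
  evenCount S = a ∧ S.card = a + b

/-!
Choose the elements of `T` greedily, making sure that no nonempty repetition-free list of chosen
elements, of any length and in any order, has product `1`. If a list through a new element `x` has
product `1`, then so has its rotation starting with `x`, hence `x⁻¹` is the product of a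
repetition-free list of elements chosen before. There are at most `(n + 1) ^ n` such products when
`n` elements have been chosen, so every sufficiently large set offers an admissible `x`; one can
thus draw first from the even and then from the odd elements of `S`.
-/

open Finset
open scoped Pointwise

/-- A finite subset `T` of a monoid is product-one free if no nonempty subset of `T` can be
ordered so that its product is `1`; an ordered subset is encoded as a list without repetitions. -/
def IsProductOneFree {M : Type*} [Monoid M] (T : Finset M) : Prop :=
  ∀ l : List M, l.Nodup → l ≠ [] → (∀ x ∈ l, x ∈ T) → l.prod ≠ 1

theorem isProductOneFree_empty {M : Type*} [Monoid M] : IsProductOneFree (∅ : Finset M) := by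
  intro l _ hne hmem
  obtain ⟨x, hx⟩ := List.exists_mem_of_ne_nil l hne
  exact absurd (hmem x hx) (notMem_empty x)

/-- The size at which a set is guaranteed to contain an `n`-element product-one free subset, and
more generally to extend a product-one free set to one with `n` elements. The summand `n` excludes
the elements already chosen, the summand `(n + 1) ^ n` the inverses of their products. -/
def extensionBound (n : ℕ) : ℕ := n + (n + 1) ^ n

theorem extensionBound_strictMono : StrictMono extensionBound :=
  strictMono_id.add_monotone fun m n h ↦
    (Nat.pow_le_pow_left (by lia) m).trans (Nat.pow_le_pow_right (by lia) h)

section Monoid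

variable {M : Type*} [Monoid M] [DecidableEq M] {T : Finset M} {l : List M}

theorem list_prod_mem_pow_length (hmem : ∀ x ∈ l, x ∈ T) : l.prod ∈ T ^ l.length := by
  induction l with
  | nil => simp
  | cons a l ih =>
    obtain ⟨ha, hl⟩ := List.forall_mem_cons.1 hmem
    simpa only [List.prod_cons, List.length_cons, pow_succ'] using mul_mem_mul ha (ih hl)

theorem list_prod_mem_insert_one_pow_card (hl : l.Nodup) (hmem : ∀ x ∈ l, x ∈ T) :
    l.prod ∈ insert 1 T ^ #T := by
  have hlength : l.length ≤ #T := by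
    rw [← List.toFinset_card_of_nodup hl]
    exact card_le_card fun x hx ↦ hmem x (List.mem_toFinset.1 hx)
  exact pow_subset_pow (subset_insert 1 T) (mem_insert_self 1 T) hlength
    (list_prod_mem_pow_length hmem)

end Monoid

section Group

variable {G : Type*} [Group G] [DecidableEq G] {T A B : Finset G}

protected theorem IsProductOneFree.insert (hT : IsProductOneFree T) {x : G}
    (hx : ∀ l : List G, l.Nodup → (∀ y ∈ l, y ∈ T) → x * l.prod ≠ 1) :
    IsProductOneFree (insert x T) := by
  intro l hl hne hmem hprod
  by_cases hxl : x ∈ l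
  · obtain ⟨u, v, rfl⟩ := List.append_of_mem hxl
    obtain ⟨hxuv, huv⟩ := List.nodup_cons.1 (List.nodup_middle.1 hl)
    refine hx (v ++ u) (List.nodup_append_comm.1 huv) (fun y hy ↦ ?_) ?_
    · have hy' : y ∈ u ++ v := List.mem_append.2 (List.mem_append.1 hy).symm
      exact mem_of_mem_insert_of_ne (hmem y (by grind)) (ne_of_mem_of_not_mem hy' hxuv)
    · rw [List.prod_append, List.prod_cons, mul_eq_one_comm] at hprod
      rwa [List.prod_append, ← mul_assoc]
  · exact hT l hl hne
      (fun y hy ↦ mem_of_mem_insert_of_ne (hmem y hy) (ne_of_mem_of_not_mem hy hxl)) hprod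

theorem IsProductOneFree.exists_insert (hT : IsProductOneFree T) (hA : extensionBound #T < #A) :
    ∃ x ∈ A, x ∉ T ∧ IsProductOneFree (insert x T) := by
  have hcard : #(T ∪ (insert 1 T ^ #T)⁻¹) ≤ extensionBound #T :=
    calc #(T ∪ (insert 1 T ^ #T)⁻¹)
      _ ≤ #T + #(insert 1 T ^ #T) := card_inv (insert 1 T ^ #T) ▸ card_union_le _ _
      _ ≤ #T + #(insert 1 T) ^ #T := by gcongr; exact card_pow_le
      _ ≤ #T + (#T + 1) ^ #T := by gcongr; exact card_insert_le 1 T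
  obtain ⟨x, hxA, hx⟩ := exists_mem_notMem_of_card_lt_card (hcard.trans_lt hA)
  obtain ⟨hxT, hxinv⟩ := notMem_union.1 hx
  refine ⟨x, hxA, hxT, hT.insert fun l hl hmem hprod ↦ hxinv ?_⟩
  rw [eq_inv_of_mul_eq_one_left hprod]
  exact inv_mem_inv (list_prod_mem_insert_one_pow_card hl hmem)

theorem IsProductOneFree.exists_union (hT : IsProductOneFree T) {m : ℕ}
    (hA : extensionBound (#T + m) ≤ #A) :
    ∃ U ⊆ A, #U = m ∧ Disjoint T U ∧ IsProductOneFree (T ∪ U) := by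
  induction m with
  | zero => exact ⟨∅, empty_subset A, card_empty, disjoint_empty_right T, by rwa [union_empty]⟩
  | succ m ih =>
    have hlt : extensionBound (#T + m) < #A :=
      (extensionBound_strictMono (Nat.lt_succ_self (#T + m))).trans_le hA
    obtain ⟨U, hUA, rfl, hTU, hfree⟩ := ih hlt.le
    rw [← card_union_of_disjoint hTU] at hlt
    obtain ⟨x, hxA, hx, hfree'⟩ := hfree.exists_insert hlt
    obtain ⟨hxT, hxU⟩ := notMem_union.1 hx
    exact ⟨insert x U, insert_subset hxA hUA, card_insert_of_notMem hxU,
      disjoint_insert_right.2 ⟨hxT, hTU⟩, by rwa [union_insert]⟩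

theorem exists_isProductOneFree_union {a b : ℕ} (hA : extensionBound a ≤ #A)
    (hB : extensionBound (a + b) ≤ #B) :
    ∃ U ⊆ A, ∃ V ⊆ B, #U = a ∧ #V = b ∧ IsProductOneFree (U ∪ V) := by
  obtain ⟨U, hUA, rfl, -, hU⟩ :=
    (isProductOneFree_empty (M := G)).exists_union (m := a) (by simpa using hA)
  rw [empty_union] at hU
  obtain ⟨V, hVB, rfl, -, hUV⟩ := hU.exists_union hB
  exact ⟨U, hUA, V, hVB, rfl, rfl, hUV⟩

end Group

section Parity

variable {N : Type*} [Group N] {φ : Z2 →* MulAut N} {S U V : Finset (N ⋊[φ] Z2)}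

theorem HasType.card_filter_odd {p q : ℕ} (h : HasType S p q) : #{g ∈ S | g.right ≠ 1} = q := by
  obtain ⟨hp, hcard⟩ := h
  have hsplit := card_filter_add_card_filter_not (s := S) (fun g ↦ g.right = 1)
  rw [evenCount] at hp
  lia

theorem hasType_union [DecidableEq (N ⋊[φ] Z2)] (hU : ∀ g ∈ U, g.right = 1)
    (hV : ∀ g ∈ V, g.right ≠ 1) : HasType (U ∪ V) #U #V := by
  constructor
  · rw [evenCount, filter_union, filter_true_of_mem hU, filter_false_of_mem hV, union_empty]
  · exact card_union_of_disjoint (disjoint_left.2 fun g hgU hgV ↦ hV g hgV (hU g hgU))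

end Parity

theorem stmt5_general (a b : ℕ) :
    ∃ K : ℕ, ∀ (N : Type*) [Group N] (φ : Z2 →* MulAut N) (S : Finset (N ⋊[φ] Z2)) (p q : ℕ),
      HasType S p q → K ≤ p → K ≤ q → ∃ T ⊆ S, HasType T a b ∧ IsProductOneFree T := by
  classical
  refine ⟨extensionBound (a + b), fun N _ φ S p q hS hp hq ↦ ?_⟩
  have hEven : extensionBound a ≤ #{g ∈ S | g.right = 1} :=
    calc extensionBound a
      _ ≤ extensionBound (a + b) := extensionBound_strictMono.monotone (Nat.le_add_right a b)
      _ ≤ evenCount S := hp.trans_eq hS.1.symm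
  have hOdd : extensionBound (a + b) ≤ #{g ∈ S | g.right ≠ 1} :=
    hq.trans_eq hS.card_filter_odd.symm
  obtain ⟨U, hU, V, hV, rfl, rfl, hfree⟩ := exists_isProductOneFree_union hEven hOdd
  exact ⟨U ∪ V, union_subset (hU.trans (filter_subset _ S)) (hV.trans (filter_subset _ S)),
    hasType_union (fun g hg ↦ (mem_filter.1 (hU hg)).2) fun g hg ↦ (mem_filter.1 (hV hg)).2, hfree⟩

/-- For every positive `t` and every even positive `ℓ` there is a
constant `k̄_{t,ℓ}` such that every balanced subset `S` of `N ⋊_φ Z_2` of size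
`k > k̄_{t,ℓ}` (type `(k/2, k/2)`) contains a subset `T` of type `(ℓ/2, ℓ/2)` none of
whose nonempty subsets of size `h ≤ t` admits an alternating parity ordering summing to
the identity. -/
theorem stmt5 (t : ℕ) (ht : 0 < t) (ℓ : ℕ) (hℓ : 0 < ℓ) (hℓe : Even ℓ) :
    ∃ kbar : ℕ, ∀ (N : Type*) [Group N] [Finite N] (φ : Z2 →* MulAut N)
      (S : Finset (N ⋊[φ] Z2)), kbar < S.card → Even S.card →
      HasType S (S.card / 2) (S.card / 2) →
      ∃ T ⊆ S, HasType T (ℓ / 2) (ℓ / 2) ∧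
        ∀ Z ⊆ T, Z.Nonempty → Z.card ≤ t →
          ¬ ∃ l : List (N ⋊[φ] Z2),
              l.Nodup ∧ (∀ x, x ∈ l ↔ x ∈ Z) ∧ AltList l ∧ l.prod = 1 := by
  obtain ⟨K, hK⟩ := stmt5_general (ℓ / 2) (ℓ / 2)
  refine ⟨2 * K, fun N _ _ φ S hS _ hSt ↦ ?_⟩
  obtain ⟨T, hTS, hTt, hfree⟩ := hK N φ S _ _ hSt (by lia) (by lia)
  exact ⟨T, hTS, hTt, fun Z hZT ⟨z, hz⟩ _ ⟨l, hl, hlZ, _, hprod⟩ ↦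
    hfree l hl (List.ne_nil_of_mem ((hlZ z).2 hz)) (fun x hx ↦ hZT ((hlZ x).1 hx)) hprod⟩
end

section
/- Let N be a finite group of odd order, let φ : Z_2 → Aut(N) be a group homomorphism, let G = N ⋊_φ Z_2, and let k ≥ 18 be an even integer. If every subset of G \ {(0,0)} of type (k/2 − 5, k/2 − 5) admits an alternating parity 4-weak sequencing, then every subset of G \ {(0,0)} of type (k/2, k/2) admits an alternating parity 4-weak sequencing. -/
/-!
Set aside five even elements `a`, `b`, `c`, `d`, `f` and five odd elements `u₁`, …, `u₅` of `S`, and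
sequence the rest of `S` by hypothesis. The reserved elements are chosen greedily so that the word
`u₁ e₁ u₂ e₂ u₃ e₃ u₄ f u₅` is a sequencing for several arrangements `e₁`, `e₂`, `e₃`, `x` of
`a`, `b`, `c`, `d`, also with `x` added at either end. Only the choice of `u₅` is tight, with five
candidates against five forbidden values. If it failed for two different choices of `f`, then
`{1, a, b, c, d}` would be stable under right multiplication by a nontrivial element; having prime
cardinality it would be a subgroup, but `a * b` was kept out of it.

The sequencing of the rest has an even element `g` at exactly one end. Attaching the word at the
other end, with an even letter `x` at the junction, involves windows of at most four letters and
forbids at most four values of `x`, so one of `a`, `b`, `c`, `d`, `g` is available. When only `g`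
is, the case of `g` in front is settled by moving `g` to the junction, and the case of `g` at the
back reduces to it by moving `g` to the front.
-/

section Picking

variable {G : Type*} [Group G]

theorem exists_mem_forall_prod_ne_one (S : Finset G) (D : List G) (P : List (List G × List G))
    (h : D.length + P.length < S.card) :
    ∃ x ∈ S, x ∉ D ∧ ∀ w ∈ P, (w.1 ++ x :: w.2).prod ≠ 1 := by
  classical
  let F : List G := D ++ P.map fun w ↦ w.1.prod⁻¹ * w.2.prod⁻¹
  have hF : F.toFinset.card < S.card :=
    (List.toFinset_card_le F).trans_lt (by simpa [F] using h)
  obtain ⟨x, hxS, hxF⟩ := Finset.exists_mem_notMem_of_card_lt_card hF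
  simp only [F, List.mem_toFinset, List.mem_append, List.mem_map, not_or, not_exists,
    not_and] at hxF
  refine ⟨x, hxS, hxF.1, fun w hw hprod ↦ hxF.2 w hw ?_⟩
  rw [List.prod_append, List.prod_cons] at hprod
  rw [eq_comm, eq_inv_mul_iff_mul_eq]
  exact eq_inv_of_mul_eq_one_left (by rwa [mul_assoc])

theorem exists_mem_forall_prod_ne_one_of_nodup {S : List G} (hS : S.Nodup)
    {P : List (List G × List G)} (h : P.length < S.length) :
    ∃ x ∈ S, ∀ w ∈ P, (w.1 ++ x :: w.2).prod ≠ 1 := by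
  classical
  obtain ⟨x, hxS, -, hxP⟩ := exists_mem_forall_prod_ne_one S.toFinset [] P
    (by rwa [List.toFinset_card_of_nodup hS, List.length_nil, Nat.zero_add])
  exact ⟨x, List.mem_toFinset.mp hxS, hxP⟩

open scoped Pointwise in
theorem coe_eq_zpowers_of_prime_card {Y : Finset G} {h : G} (hY : Y.card.Prime) (h1 : 1 ∈ Y)
    (hh : h ≠ 1) (hYh : ∀ y ∈ Y, y * h ∈ Y) : (Y : Set G) = Subgroup.zpowers h := by
  classical
  have hstab : MulOpposite.op h ∈ MulAction.stabilizer Gᵐᵒᵖ Y :=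
    MulAction.mem_stabilizer_finset'.mpr hYh
  have hpow (g : G) (hg : g ∈ Subgroup.zpowers h) (y : G) (hy : y ∈ Y) : y * g ∈ Y := by
    obtain ⟨n, rfl⟩ := hg
    exact MulAction.mem_stabilizer_finset'.mp (zpow_mem hstab n) hy
  have hsub : (Subgroup.zpowers h : Set G) ⊆ Y := fun g hg ↦ by simpa using hpow g hg 1 h1
  have hmul : (Y : Set G) * (Subgroup.zpowers h : Set G) = Y :=
    Set.Subset.antisymm (Set.mul_subset_iff.mpr fun y hy g hg ↦ hpow g hg y hy)
      (Set.subset_mul_left _ (one_mem _))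
  have hdvd : Nat.card (Subgroup.zpowers h) ∣ Y.card := by
    have := Subgroup.card_mul_eq_card_subgroup_mul_card_quotient (Subgroup.zpowers h) (Y : Set G)
    rw [hmul, Nat.card_coe_set_eq, Set.ncard_coe_finset] at this
    exact ⟨_, this⟩
  have hcard : Nat.card (Subgroup.zpowers h) = Y.card :=
    (hY.eq_one_or_self_of_dvd _ hdvd).resolve_left (by simpa using hh)
  refine (Set.eq_of_subset_of_ncard_le hsub ?_).symm
  rw [Set.ncard_coe_finset, ← hcard, ← Nat.card_coe_set_eq]
  rfl

theorem exists_mem_forall_mul_mul_ne_one {R Y : Finset G} {a b v v' : G} (hcard : Y.card ≤ R.card)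
    (hY : Y.card.Prime) (h1 : 1 ∈ Y) (ha : a ∈ Y) (hb : b ∈ Y) (hab : a * b ∉ Y) (hv : v ≠ v') :
    ∃ g ∈ [v, v'], ∃ u ∈ R, ∀ y ∈ Y, g * u * y ≠ 1 := by
  by_contra! hcon
  have hmaps (g : G) (hg : g ∈ [v, v']) : Set.MapsTo (fun u ↦ (g * u)⁻¹) R Y := by
    intro u hu
    obtain ⟨y, hy, hguy⟩ := hcon g hg u hu
    change (g * u)⁻¹ ∈ Y
    rwa [← eq_inv_of_mul_eq_one_right hguy]
  have hinj : Set.InjOn (fun u ↦ (v * u)⁻¹) R := fun u _ w _ h ↦ by simpa using h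
  have hsurj := Finset.surjOn_of_injOn_of_card_le _ (hmaps v (by simp)) hinj hcard
  have hYh : ∀ y ∈ Y, y * (v * v'⁻¹) ∈ Y := by
    intro y hy
    obtain ⟨u, hu, rfl⟩ := hsurj hy
    simpa [mul_assoc] using hmaps v' (by simp) hu
  have hzpowers := coe_eq_zpowers_of_prime_card hY h1 (by rwa [Ne, mul_inv_eq_one]) hYh
  rw [← Finset.mem_coe, hzpowers] at ha hb hab
  exact hab (mul_mem ha hb)

theorem exists_mem_exists_mem_forall_prod_ne_one {E O : Finset G} {D D' Y : List G}
    {P : List (List G × List G)} {a b : G} (u : G) (hE : D.length + P.length + 1 < E.card)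
    (hO : D'.length + Y.length ≤ O.card) (hYnodup : Y.Nodup) (hY : Y.length.Prime) (h1 : 1 ∈ Y)
    (ha : a ∈ Y) (hb : b ∈ Y) (hab : a * b ∉ Y) :
    ∃ f ∈ E, f ∉ D ∧ (∀ w ∈ P, (w.1 ++ f :: w.2).prod ≠ 1) ∧
      ∃ v ∈ O, v ∉ D' ∧ ∀ y ∈ Y, [u, f, v, y].prod ≠ 1 := by
  classical
  obtain ⟨f, hfE, hfD, hfP⟩ := exists_mem_forall_prod_ne_one E D P (by omega)
  obtain ⟨f', hfE', hfD', hfP'⟩ := exists_mem_forall_prod_ne_one E (f :: D) P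
    (by rw [List.length_cons]; omega)
  have hYcard : Y.toFinset.card = Y.length := List.toFinset_card_of_nodup hYnodup
  have hcard : Y.toFinset.card ≤ (O \ D'.toFinset).card := by
    have := Finset.le_card_sdiff D'.toFinset O
    have := D'.toFinset_card_le
    omega
  obtain ⟨g, hg, v, hv, hgv⟩ := exists_mem_forall_mul_mul_ne_one (v := u * f) (v' := u * f') hcard
    (hYcard ▸ hY) (List.mem_toFinset.mpr h1) (List.mem_toFinset.mpr ha) (List.mem_toFinset.mpr hb)
    (by rwa [List.mem_toFinset]) fun h ↦ hfD' (by simp [mul_left_cancel h])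
  simp only [List.mem_cons, List.not_mem_nil, or_false] at hg
  simp only [Finset.mem_sdiff, List.mem_toFinset] at hv hgv
  rcases hg with rfl | rfl
  · exact ⟨f, hfE, hfD, hfP, v, hv.1, hv.2, by simpa [mul_assoc] using hgv⟩
  · exact ⟨f', hfE', fun h ↦ hfD' (List.mem_cons_of_mem f h), hfP', v, hv.1, hv.2,
      by simpa [mul_assoc] using hgv⟩

end Picking

section WeakSeq

variable {G : Type*} [Group G] {t : ℕ} {x : G} {l m r : List G}

namespace WeakSeqList

theorem nil : WeakSeqList t ([] : List G) :=
  fun _ _ hij hj ↦ absurd hj (Nat.not_le.mpr (Nat.zero_lt_of_lt hij))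

theorem of_append_left (h : WeakSeqList t (l ++ m)) : WeakSeqList t l := by
  intro i j hij hj ht
  have := h i j hij (by rw [List.length_append]; omega) ht
  rwa [List.take_append_of_le_length (by omega), List.take_append_of_le_length hj] at this

theorem of_append_right (h : WeakSeqList t (l ++ m)) : WeakSeqList t m := by
  intro i j hij hj ht heq
  exact h (l.length + i) (l.length + j) (by omega) (by simpa using hj) (by omega)
    (by rw [List.take_length_add_append, List.take_length_add_append, List.prod_append,
      List.prod_append, heq])

theorem append_overlap (hm : t ≤ m.length + 1) (hl : WeakSeqList t (l ++ m))
    (hr : WeakSeqList t (m ++ r)) : WeakSeqList t (l ++ m ++ r) := by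
  intro i j hij hj ht heq
  by_cases hjl : j ≤ (l ++ m).length
  · rw [List.take_append_of_le_length (by omega), List.take_append_of_le_length hjl] at heq
    exact hl i j hij hjl ht heq
  · simp only [List.length_append] at hj hjl
    refine hr (i - l.length) (j - l.length) (by omega) (by rw [List.length_append]; omega)
      (by omega) ?_
    rw [List.append_assoc, List.take_append, List.take_append (i := j),
      List.take_of_length_le (i := i) (by omega), List.take_of_length_le (i := j) (by omega),
      List.prod_append, List.prod_append] at heq
    exact mul_left_cancel heq

theorem cons (hl : WeakSeqList t l) (hx : ∀ j < t, j ≤ l.length → x * (l.take j).prod ≠ 1) :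
    WeakSeqList t (x :: l) := by
  rintro (_ | i) (_ | j) hij hj ht
  · exact absurd hij (lt_irrefl 0)
  · simpa using (hx j (by omega) (by simpa using hj)).symm
  · exact absurd hij (Nat.not_lt_zero _)
  · simpa using hl i j (by omega) (by simpa using hj) (by omega)

theorem one_notMem (ht : 0 < t) (h : WeakSeqList t l) : 1 ∉ l := by
  intro h1
  obtain ⟨s, r, rfl⟩ := List.append_of_mem h1
  exact h.of_append_right 0 1 (by simp) (by simp) (by omega) (by simp)

end WeakSeqList

end WeakSeq

section Parity

variable {G : Type*} [Group G] {p : G →* Z2} {x y z u v f g : G} {l m r w : List G}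

theorem prod_pair_ne_one (hxy : p x ≠ p y) : [x, y].prod ≠ 1 := by
  intro h
  have hp : p x * p y = 1 := by simpa using congrArg p h
  generalize p x = a, p y = b at hp hxy
  revert a b; decide

theorem prod_triple_ne_one (hxy : p x ≠ p y) (hyz : p y ≠ p z) (hy : p y ≠ 1) :
    [x, y, z].prod ≠ 1 := by
  intro h
  have hp : p x * (p y * p z) = 1 := by simpa using congrArg p h
  generalize p x = a, p y = b, p z = c at hp hxy hyz hy
  revert a b c; decide

theorem prod_ne_one_of_prod_rotate_ne_one (n : ℕ) (h : (l.rotate n).prod ≠ 1) : l.prod ≠ 1 :=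
  fun hl ↦ h (List.prod_rotate_eq_one_of_prod_eq_one hl n)

theorem parity_head_eq_parity_last_iff :
    ∀ (m : List G) {x z : G}, (x :: m ++ [z]).IsChain (p · ≠ p ·) →
      (p x = p z ↔ Odd m.length)
  | [], x, z, h => by simpa using h
  | y :: m, x, z, h => by
    have hxy : p x ≠ p y := (List.isChain_cons_cons.mp h).1
    have ih := parity_head_eq_parity_last_iff m (List.isChain_cons_cons.mp h).2
    rw [List.length_cons, Nat.odd_add_one, ← ih]
    generalize p x = a, p y = b, p z = c at hxy
    revert a b c; decide

variable (p) in
/-- `AltWeakSeq p l` says that `l` is an alternating parity `4`-weak sequencing, where the parity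
of an element is its image under `p`: `x` is even when `p x = 1`. -/
def AltWeakSeq (l : List G) : Prop :=
  l.IsChain (p · ≠ p ·) ∧ WeakSeqList 4 l

namespace AltWeakSeq

theorem of_append_left (h : AltWeakSeq p (l ++ m)) : AltWeakSeq p l :=
  ⟨h.1.left_of_append, h.2.of_append_left⟩

theorem of_append_right (h : AltWeakSeq p (l ++ m)) : AltWeakSeq p m :=
  ⟨h.1.right_of_append, h.2.of_append_right⟩

theorem ne_one (h : AltWeakSeq p l) (hx : x ∈ l) : x ≠ 1 :=
  ne_of_mem_of_not_mem hx (h.2.one_notMem (by decide))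

theorem append_overlap (hm : 3 ≤ m.length) (hl : AltWeakSeq p (l ++ m))
    (hr : AltWeakSeq p (m ++ r)) : AltWeakSeq p (l ++ m ++ r) :=
  ⟨hl.1.append_overlap hr.1 (List.ne_nil_of_length_pos (by omega)),
    hl.2.append_overlap (by omega) hr.2⟩

theorem singleton (hx : x ≠ 1) : AltWeakSeq p [x] :=
  ⟨List.isChain_singleton x, WeakSeqList.nil.cons fun _ _ _ ↦ by simpa using hx⟩

theorem cons (h : AltWeakSeq p (y :: l)) (hx : x ≠ 1) (hxy : p x ≠ p y)
    (h₃ : ((x :: y :: l).take 3).prod ≠ 1) (h₄ : ((x :: y :: l).take 4).prod ≠ 1) :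
    AltWeakSeq p (x :: y :: l) := by
  refine ⟨List.isChain_cons_cons.mpr ⟨hxy, h.1⟩, h.2.cons fun j hj _ ↦ ?_⟩
  interval_cases j
  · simpa using hx
  · simpa using prod_pair_ne_one hxy
  · simpa using h₃
  · simpa using h₄

theorem append_of_windows {q r s : G} (hl : AltWeakSeq p (l ++ [q, r, s]))
    (hw : AltWeakSeq p (x :: y :: z :: w)) (ps : p s ≠ 1) (px : p x = 1)
    (hsxy : [s, x, y].prod ≠ 1) (hqrsx : [q, r, s, x].prod ≠ 1) (hrsxy : [r, s, x, y].prod ≠ 1)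
    (hsxyz : [s, x, y, z].prod ≠ 1) : AltWeakSeq p (l ++ [q, r, s] ++ x :: y :: z :: w) := by
  have hqrs : AltWeakSeq p [q, r, s] := hl.of_append_right
  obtain ⟨hqr, hrs⟩ : p q ≠ p r ∧ p r ≠ p s := by simpa using hqrs.1
  have hsx : p s ≠ p x := by rwa [px]
  have hs := hw.cons (hqrs.ne_one (by simp)) hsx hsxy hsxyz
  have hr := hs.cons (hqrs.ne_one (by simp)) hrs (prod_triple_ne_one hrs hsx ps) hrsxy
  have hq := hr.cons (hqrs.ne_one (by simp)) hqr
    (fun h ↦ hqrs.2 0 3 (by simp) (by simp) (by simp) (by simpa using h.symm)) hqrsx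
  exact hl.append_overlap (by simp) hq

theorem cons_of_even (h : AltWeakSeq p (y :: z :: w)) (hx : x ≠ 1) (px : p x = 1) (py : p y ≠ 1)
    (hw : ((x :: y :: z :: w).take 4).prod ≠ 1) : AltWeakSeq p (x :: y :: z :: w) := by
  have hxy : p x ≠ p y := by rw [px]; exact py.symm
  have hyz : p y ≠ p z := (List.isChain_cons_cons.mp h.1).1
  exact h.cons hx hxy (prod_triple_ne_one hxy hyz py) hw

theorem cons_cons (h : AltWeakSeq p (f :: v :: y :: w)) (hx : x ≠ 1) (px : p x = 1)
    (pu : p u ≠ 1) (pf : p f = 1) (hufv : ∀ e ∈ [1, x, y], [u, f, v, e].prod ≠ 1) :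
    AltWeakSeq p (x :: u :: f :: v :: y :: w) := by
  have hu : u ≠ 1 := fun hu ↦ pu (by rw [hu, map_one])
  have h' := h.cons hu (by rwa [pf]) (by simpa using hufv 1 (by simp)) (hufv y (by simp))
  exact h'.cons_of_even hx px pu (prod_ne_one_of_prod_rotate_ne_one 1 (hufv x (by simp)))

end AltWeakSeq

end Parity

/-- Ten elements of a group kept aside to extend a sequencing: `a`, `b`, `c`, `d`, `f` are meant to
be even and `u₁`, …, `u₅` odd. -/
structure Reserve (G : Type*) where
  (a b c d f u₁ u₂ u₃ u₄ u₅ : G)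

namespace Reserve

variable {G : Type*}

/-- The elements of a reserve that are meant to be even. -/
def evens (r : Reserve G) : List G := [r.a, r.b, r.c, r.d, r.f]

/-- The elements of a reserve that are meant to be odd. -/
def odds (r : Reserve G) : List G := [r.u₁, r.u₂, r.u₃, r.u₄, r.u₅]

/-- The alternating word on a reserve whose first three even letters are `e₁`, `e₂`, `e₃`. -/
def block (r : Reserve G) (e₁ e₂ e₃ : G) : List G :=
  [r.u₁, e₁, r.u₂, e₂, r.u₃, e₃, r.u₄, r.f, r.u₅]

/-- The quadruples `(e₁, e₂, e₃, x)`, out of all orders of `a`, `b`, `c`, `d`, for which a flexible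
reserve makes `r.block e₁ e₂ e₃`, with `x` added at either end, a sequencing. -/
def arrangements (r : Reserve G) : List (G × G × G × G) :=
  [(r.a, r.b, r.c, r.d), (r.a, r.c, r.d, r.b), (r.a, r.b, r.d, r.c), (r.b, r.c, r.d, r.a),
    (r.c, r.b, r.d, r.a)]

theorem perm_of_mem_arrangements {r : Reserve G} {e₁ e₂ e₃ x : G}
    (h : (e₁, e₂, e₃, x) ∈ r.arrangements) :
    (x :: r.block e₁ e₂ e₃).Perm (r.evens ++ r.odds) := by
  classical
  simp only [arrangements, List.mem_cons, Prod.mk.injEq, List.not_mem_nil, or_false] at h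
  refine List.perm_iff_count.mpr fun y ↦ ?_
  rcases h with ⟨rfl, rfl, rfl, rfl⟩ | ⟨rfl, rfl, rfl, rfl⟩ | ⟨rfl, rfl, rfl, rfl⟩ |
    ⟨rfl, rfl, rfl, rfl⟩ | ⟨rfl, rfl, rfl, rfl⟩ <;>
  · simp only [block, evens, odds, List.cons_append, List.nil_append, List.count_cons]
    omega

variable [Group G]

/-- A reserve is flexible when its even and odd elements are distinct and avoid the products that
would obstruct the sequencings described by `Reserve.arrangements`. The entry `1` of the lists
below turns a condition on four consecutive letters into one on three. -/
structure IsFlexible (r : Reserve G) : Prop where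
  nodup_evens : r.evens.Nodup
  nodup_odds : r.odds.Nodup
  u₁_a_u₂ : ∀ e ∈ [1, r.b, r.c, r.d], [r.u₁, r.a, r.u₂, e].prod ≠ 1
  u₁_b_u₂ : ∀ e ∈ [1, r.a, r.c], [r.u₁, r.b, r.u₂, e].prod ≠ 1
  u₁_c_u₂ : ∀ e ∈ [1, r.a, r.b], [r.u₁, r.c, r.u₂, e].prod ≠ 1
  u₂_b_u₃ : ∀ e ∈ [1, r.a, r.c, r.d], [r.u₂, r.b, r.u₃, e].prod ≠ 1
  u₂_c_u₃ : ∀ e ∈ [1, r.a, r.b, r.d], [r.u₂, r.c, r.u₃, e].prod ≠ 1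
  u₃_c_u₄ : ∀ e ∈ [1, r.b, r.f], [r.u₃, r.c, r.u₄, e].prod ≠ 1
  u₃_d_u₄ : ∀ e ∈ [1, r.b, r.c, r.f], [r.u₃, r.d, r.u₄, e].prod ≠ 1
  u₄_f_u₅ : ∀ e ∈ [1, r.a, r.b, r.c, r.d], [r.u₄, r.f, r.u₅, e].prod ≠ 1

theorem exists_isFlexible {E O : Finset G} (hE : 9 ≤ E.card) (hO : 9 ≤ O.card) (h1 : 1 ∉ E) :
    ∃ r : Reserve G, r.IsFlexible ∧ (∀ x ∈ r.evens, x ∈ E) ∧ ∀ x ∈ r.odds, x ∈ O := by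
  classical
  obtain ⟨a, haE⟩ : E.Nonempty := Finset.card_pos.mp (by omega)
  obtain ⟨b, hbE, hb⟩ := exists_mem_forall_prod_ne_one E [a, a⁻¹] [] (by simp; omega)
  obtain ⟨u₂, hu₂O⟩ : O.Nonempty := Finset.card_pos.mp (by omega)
  obtain ⟨u₁, hu₁O, hu₁⟩ := exists_mem_forall_prod_ne_one O [u₂]
    [([], [a, u₂, 1]), ([], [a, u₂, b]), ([], [b, u₂, 1]), ([], [b, u₂, a])] (by simp; omega)
  obtain ⟨c, hcE, hc⟩ := exists_mem_forall_prod_ne_one E [a, b, a * b]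
    [([u₁, a, u₂], []), ([u₁, b, u₂], []), ([u₁], [u₂, 1]), ([u₁], [u₂, a]), ([u₁], [u₂, b])]
    (by simp; omega)
  obtain ⟨u₃, hu₃O, hu₃⟩ := exists_mem_forall_prod_ne_one O [u₁, u₂]
    [([u₂, b], [1]), ([u₂, b], [a]), ([u₂, b], [c]), ([u₂, c], [1]), ([u₂, c], [a]),
      ([u₂, c], [b])] (by simp; omega)
  obtain ⟨d, hdE, hd⟩ := exists_mem_forall_prod_ne_one E [a, b, c, a * b]
    [([u₁, a, u₂], []), ([u₂, b, u₃], []), ([u₂, c, u₃], [])] (by simp; omega)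
  obtain ⟨u₄, hu₄O, hu₄⟩ := exists_mem_forall_prod_ne_one O [u₁, u₂, u₃]
    [([u₃, c], [1]), ([u₃, c], [b]), ([u₃, d], [1]), ([u₃, d], [b]), ([u₃, d], [c])]
    (by simp; omega)
  have hnodup : [1, a, b, c, d].Nodup := by
    simp only [List.nodup_cons, List.mem_cons, List.not_mem_nil, or_false] at hb hc hd ⊢
    grind
  have hab : a * b ∉ [1, a, b, c, d] := by
    simp only [List.nodup_cons, List.mem_cons, List.not_mem_nil, or_false,
      mul_eq_one_iff_eq_inv', mul_eq_left, mul_eq_right] at hb hc hd hnodup ⊢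
    grind
  obtain ⟨f, hfE, hf, hf', u₅, hu₅O, hu₅, h₄⟩ := exists_mem_exists_mem_forall_prod_ne_one
    (E := E) (O := O) (D := [a, b, c, d]) (P := [([u₃, c, u₄], []), ([u₃, d, u₄], [])])
    (D' := [u₁, u₂, u₃, u₄]) u₄ (by simp; omega) (by simpa using hO) hnodup Nat.prime_five
    (by simp) (by simp) (by simp) hab
  simp only [List.mem_cons, List.not_mem_nil, or_false, not_or, forall_eq_or_imp, forall_eq,
    List.cons_append, List.nil_append] at hb hu₁ hc hu₃ hd hu₄ hf hf' hu₅ h₄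
  refine ⟨⟨a, b, c, d, f, u₁, u₂, u₃, u₄, u₅⟩, ⟨?_, ?_, ?_, ?_, ?_, ?_, ?_, ?_, ?_, ?_⟩, ?_, ?_⟩ <;>
  simp only [evens, odds, List.nodup_cons, List.mem_cons, List.not_mem_nil, or_false,
    forall_eq_or_imp, forall_eq] <;> grind

variable {p : G →* Z2} {r : Reserve G} {e₁ e₂ e₃ x : G}

theorem altWeakSeq_cons_block_append (he : ∀ e ∈ [x, e₁, e₂, e₃, r.f], e ≠ 1 ∧ p e = 1)
    (hu : ∀ u ∈ r.odds, p u ≠ 1) (h₁ : ∀ e ∈ [1, x, e₂], [r.u₁, e₁, r.u₂, e].prod ≠ 1)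
    (h₂ : ∀ e ∈ [1, e₁, e₃], [r.u₂, e₂, r.u₃, e].prod ≠ 1)
    (h₃ : ∀ e ∈ [1, e₂, r.f], [r.u₃, e₃, r.u₄, e].prod ≠ 1)
    (h₄ : ∀ e ∈ [1, e₃, x], [r.u₄, r.f, r.u₅, e].prod ≠ 1) :
    AltWeakSeq p (x :: r.block e₁ e₂ e₃ ++ [x]) := by
  simp only [odds, List.forall_mem_cons, List.not_mem_nil, IsEmpty.forall_iff, implies_true,
    and_true] at he hu
  obtain ⟨⟨hx, px⟩, ⟨he₁, pe₁⟩, ⟨he₂, pe₂⟩, ⟨he₃, pe₃⟩, ⟨hf, pf⟩⟩ := he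
  obtain ⟨pu₁, pu₂, pu₃, pu₄, pu₅⟩ := hu
  have hu₅ : r.u₅ ≠ 1 := fun h ↦ pu₅ (by rw [h, map_one])
  have hu₅x : p r.u₅ ≠ p x := by rwa [px]
  have hfu₅ : p r.f ≠ p r.u₅ := by rw [pf]; exact pu₅.symm
  have hu₅xw : [r.u₅, x].prod ≠ 1 := prod_pair_ne_one hu₅x
  have hfu₅xw : [r.f, r.u₅, x].prod ≠ 1 := prod_triple_ne_one hfu₅ hu₅x pu₅
  have h : AltWeakSeq p [r.f, r.u₅, x] :=
    ((AltWeakSeq.singleton hx).cons hu₅ hu₅x hu₅xw hu₅xw).cons hf hfu₅ hfu₅xw hfu₅xw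
  have h' := (h.cons_cons he₃ pe₃ pu₄ pf h₄).cons_cons he₂ pe₂ pu₃ pe₃ h₃
  exact (h'.cons_cons he₁ pe₁ pu₂ pe₂ h₂).cons_cons hx px pu₁ pe₁ h₁

theorem IsFlexible.altWeakSeq_of_mem_arrangements (hr : r.IsFlexible)
    (he : ∀ e ∈ r.evens, e ≠ 1 ∧ p e = 1) (hu : ∀ u ∈ r.odds, p u ≠ 1)
    (h : (e₁, e₂, e₃, x) ∈ r.arrangements) : AltWeakSeq p (x :: r.block e₁ e₂ e₃ ++ [x]) := by
  simp only [arrangements, List.mem_cons, Prod.mk.injEq, List.not_mem_nil, or_false] at h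
  have hevens {Y : List G} (hY : Y ⊆ r.evens) (e : G) (h : e ∈ Y) : e ≠ 1 ∧ p e = 1 :=
    he e (hY h)
  have hsub {Y Z : List G} {g g' g'' : G} (h : ∀ e ∈ Z, [g, g', g'', e].prod ≠ 1) (hYZ : Y ⊆ Z)
      (e : G) (he : e ∈ Y) : [g, g', g'', e].prod ≠ 1 := h e (hYZ he)
  rcases h with ⟨rfl, rfl, rfl, rfl⟩ | ⟨rfl, rfl, rfl, rfl⟩ | ⟨rfl, rfl, rfl, rfl⟩ |
    ⟨rfl, rfl, rfl, rfl⟩ | ⟨rfl, rfl, rfl, rfl⟩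
  · refine altWeakSeq_cons_block_append (hevens ?_) hu (hsub hr.u₁_a_u₂ ?_)
      (hsub hr.u₂_b_u₃ ?_) (hsub hr.u₃_c_u₄ ?_) (hsub hr.u₄_f_u₅ ?_) <;> simp [evens]
  · refine altWeakSeq_cons_block_append (hevens ?_) hu (hsub hr.u₁_a_u₂ ?_)
      (hsub hr.u₂_c_u₃ ?_) (hsub hr.u₃_d_u₄ ?_) (hsub hr.u₄_f_u₅ ?_) <;> simp [evens]
  · refine altWeakSeq_cons_block_append (hevens ?_) hu (hsub hr.u₁_a_u₂ ?_)
      (hsub hr.u₂_b_u₃ ?_) (hsub hr.u₃_d_u₄ ?_) (hsub hr.u₄_f_u₅ ?_) <;> simp [evens]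
  · refine altWeakSeq_cons_block_append (hevens ?_) hu (hsub hr.u₁_b_u₂ ?_)
      (hsub hr.u₂_c_u₃ ?_) (hsub hr.u₃_d_u₄ ?_) (hsub hr.u₄_f_u₅ ?_) <;> simp [evens]
  · refine altWeakSeq_cons_block_append (hevens ?_) hu (hsub hr.u₁_c_u₂ ?_)
      (hsub hr.u₂_b_u₃ ?_) (hsub hr.u₃_d_u₄ ?_) (hsub hr.u₄_f_u₅ ?_) <;> simp [evens]

theorem IsFlexible.exists_last_mem_arrangements (hr : r.IsFlexible) {s : G}
    (hx : x ∈ [r.a, r.b, r.c, r.d]) (hs : [s, x, r.u₁, r.a].prod ≠ 1) :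
    ∃ e₁ e₂ e₃, (e₁, e₂, e₃, x) ∈ r.arrangements ∧ [s, x, r.u₁, e₁].prod ≠ 1 := by
  have hbc : [r.b, r.c].Nodup := hr.nodup_evens.sublist (by simp [evens])
  simp only [List.mem_cons, List.not_mem_nil, or_false] at hx
  rcases hx with rfl | rfl | rfl | rfl
  · obtain ⟨e, he, hse⟩ := exists_mem_forall_prod_ne_one_of_nodup hbc
      (P := [([s, r.a, r.u₁], [])]) (by simp)
    simp only [List.mem_cons, List.not_mem_nil, or_false, forall_eq] at he hse
    rcases he with rfl | rfl
    · exact ⟨r.b, r.c, r.d, by simp [arrangements], hse⟩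
    · exact ⟨r.c, r.b, r.d, by simp [arrangements], hse⟩
  · exact ⟨r.a, r.c, r.d, by simp [arrangements], hs⟩
  · exact ⟨r.a, r.b, r.d, by simp [arrangements], hs⟩
  · exact ⟨r.a, r.b, r.c, by simp [arrangements], hs⟩

theorem IsFlexible.exists_mem_arrangements (hr : r.IsFlexible) (s g : G) :
    ∃ e₁ e₂ e₃ x, (e₁, e₂, e₃, x) ∈ r.arrangements ∧ [s, g, r.u₁, e₁].prod ≠ 1 ∧
      [g, r.u₁, e₁, r.u₂].prod ≠ 1 := by
  have habc : [r.a, r.b, r.c].Nodup := hr.nodup_evens.sublist (by simp [evens])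
  obtain ⟨e, he, hse⟩ := exists_mem_forall_prod_ne_one_of_nodup habc
    (P := [([s, g, r.u₁], []), ([g, r.u₁], [r.u₂])]) (by simp)
  simp only [List.mem_cons, List.not_mem_nil, or_false, forall_eq_or_imp, forall_eq] at he hse
  rcases he with rfl | rfl | rfl
  · exact ⟨r.a, r.b, r.c, r.d, by simp [arrangements], hse⟩
  · exact ⟨r.b, r.c, r.d, r.a, by simp [arrangements], hse⟩
  · exact ⟨r.c, r.b, r.d, r.a, by simp [arrangements], hse⟩

theorem IsFlexible.exists_eq_or_mem_forall_prod_ne_one (hr : r.IsFlexible) {g : G}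
    (hg : g ∉ r.evens) {P : List (List G × List G)} (hP : P.length ≤ 4) :
    ∃ x, (x = g ∨ x ∈ [r.a, r.b, r.c, r.d]) ∧ ∀ w ∈ P, (w.1 ++ x :: w.2).prod ≠ 1 := by
  have habcd : [r.a, r.b, r.c, r.d].Sublist r.evens := by simp [evens]
  obtain ⟨x, hx, hxP⟩ := exists_mem_forall_prod_ne_one_of_nodup (P := P)
    ((hr.nodup_evens.sublist habcd).cons fun h ↦ hg (habcd.subset h)) (Nat.lt_succ_of_le hP)
  exact ⟨x, List.mem_cons.mp hx, hxP⟩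

theorem IsFlexible.exists_altWeakSeq_perm_cons (hr : r.IsFlexible)
    (he : ∀ e ∈ r.evens, e ≠ 1 ∧ p e = 1) (hu : ∀ u ∈ r.odds, p u ≠ 1) {g : G} {m : List G}
    (hm : AltWeakSeq p (g :: m)) (pg : p g = 1) (hlen : 3 ≤ m.length) (hodd : Odd m.length)
    (hg : g ∉ r.evens) : ∃ L, AltWeakSeq p L ∧ L.Perm (g :: m ++ (r.evens ++ r.odds)) := by
  obtain ⟨K, q, t, s, rfl⟩ : ∃ K q t s, m = K ++ [q, t, s] := by
    obtain ⟨q, t, s, hdrop⟩ := List.length_eq_three.mp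
      (show (m.drop (m.length - 3)).length = 3 by rw [List.length_drop]; omega)
    exact ⟨_, q, t, s, by rw [← hdrop, List.take_append_drop]⟩
  have ps : p s ≠ 1 := by
    have := parity_head_eq_parity_last_iff (p := p) (K ++ [q, t]) (x := g) (z := s)
      (by simpa using hm.1)
    rw [← pg, ne_comm, Ne, this]
    simpa [Nat.odd_add_one] using hodd
  obtain ⟨x, hx, hxw⟩ := hr.exists_eq_or_mem_forall_prod_ne_one hg
    (P := [([q, t, s], []), ([s], [r.u₁]), ([t, s], [r.u₁]), ([s], [r.u₁, r.a])]) (by simp)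
  simp only [List.mem_cons, List.not_mem_nil, or_false, forall_eq_or_imp, forall_eq,
    List.cons_append, List.nil_append] at hxw
  obtain ⟨hqtsx, hsxu, htsxu, hsxua⟩ := hxw
  rcases hx with rfl | hx
  · obtain ⟨e₁, e₂, e₃, x', hmem, hsxue, hxueu⟩ := hr.exists_mem_arrangements s x
    have hloop := hr.altWeakSeq_of_mem_arrangements he hu hmem
    have hblock : AltWeakSeq p (x :: (r.block e₁ e₂ e₃ ++ [x'])) :=
      (hloop.of_append_right (l := [x'])).cons_of_even (hm.ne_one (by simp)) pg
        (hu _ (by simp [odds])) hxueu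
    refine ⟨_, AltWeakSeq.append_of_windows (hm.of_append_right (l := [x])) hblock ps pg hsxu hqtsx
      htsxu hsxue, List.perm_middle.trans (.cons x (.append_left _ ?_))⟩
    exact (List.perm_append_singleton _ _).trans (perm_of_mem_arrangements hmem)
  · obtain ⟨e₁, e₂, e₃, hmem, hsxue⟩ := hr.exists_last_mem_arrangements hx hsxua
    have px : p x = 1 := (he x (List.mem_append_left [r.f] hx)).2
    exact ⟨_, AltWeakSeq.append_of_windows (l := g :: K) hm
      (hr.altWeakSeq_of_mem_arrangements he hu hmem).of_append_left ps px hsxu hqtsx htsxu hsxue,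
      (perm_of_mem_arrangements hmem).append_left _⟩

theorem IsFlexible.exists_altWeakSeq_perm_concat (hr : r.IsFlexible)
    (he : ∀ e ∈ r.evens, e ≠ 1 ∧ p e = 1) (hu : ∀ u ∈ r.odds, p u ≠ 1) {g : G} {m : List G}
    (hm : AltWeakSeq p (m ++ [g])) (pg : p g = 1) (hlen : 3 ≤ m.length) (hodd : Odd m.length)
    (hg : g ∉ r.evens) : ∃ L, AltWeakSeq p L ∧ L.Perm (m ++ [g] ++ (r.evens ++ r.odds)) := by
  obtain ⟨y, z, w, K, rfl⟩ : ∃ y z w K, m = y :: z :: w :: K := by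
    match m, hlen with
    | y :: z :: w :: K, _ => exact ⟨y, z, w, K, rfl⟩
  have py : p y ≠ 1 := by
    rw [← pg, Ne, parity_head_eq_parity_last_iff (z :: w :: K) hm.1]
    simpa [Nat.odd_add_one] using hodd
  obtain ⟨x, hx, hxw⟩ := hr.exists_eq_or_mem_forall_prod_ne_one hg
    (P := [([], [y, z, w]), ([r.u₅], [y]), ([r.f, r.u₅], [y]), ([r.u₅], [y, z])]) (by simp)
  simp only [List.mem_cons, List.not_mem_nil, or_false, forall_eq_or_imp, forall_eq,
    List.cons_append, List.nil_append] at hxw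
  obtain ⟨hxyzw, hvxy, hfvxy, hvxyz⟩ := hxw
  rcases hx with rfl | hx
  · have hxm := (hm.of_append_left).cons_of_even (hm.ne_one (by simp)) pg py hxyzw
    obtain ⟨L, hL, hperm⟩ := hr.exists_altWeakSeq_perm_cons he hu hxm pg hlen hodd hg
    exact ⟨L, hL, hperm.trans (((List.perm_append_singleton _ _).symm).append_right _)⟩
  · obtain ⟨e₁, e₂, e₃, hmem⟩ : ∃ e₁ e₂ e₃, (e₁, e₂, e₃, x) ∈ r.arrangements := by
      simp only [arrangements, List.mem_cons, List.not_mem_nil, or_false, Prod.mk.injEq] at hx ⊢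
      grind
    have hloop := hr.altWeakSeq_of_mem_arrangements he hu hmem
    have px : x ≠ 1 ∧ p x = 1 := he x (List.mem_append_left [r.f] hx)
    have hxm := hm.cons_of_even px.1 px.2 py hxyzw
    have hblock : AltWeakSeq p ([r.u₁, e₁, r.u₂, e₂, r.u₃, e₃] ++ [r.u₄, r.f, r.u₅]) :=
      hloop.of_append_left.of_append_right (l := [x])
    refine ⟨_, hblock.append_of_windows hxm (hu _ (by simp [odds])) px.2 hvxy
      (hr.u₄_f_u₅ x (List.mem_cons_of_mem 1 hx)) hfvxy hvxyz, ?_⟩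
    exact List.perm_middle.trans (List.perm_append_comm.trans
      ((perm_of_mem_arrangements hmem).append_left _))

theorem IsFlexible.exists_altWeakSeq_perm (hr : r.IsFlexible)
    (he : ∀ e ∈ r.evens, e ≠ 1 ∧ p e = 1) (hu : ∀ u ∈ r.odds, p u ≠ 1) {l : List G}
    (hl : AltWeakSeq p l) (hlen : 4 ≤ l.length) (heven : Even l.length)
    (hdisj : ∀ g ∈ l, g ∉ r.evens) :
    ∃ L, AltWeakSeq p L ∧ L.Perm (l ++ (r.evens ++ r.odds)) := by
  obtain ⟨x, m, g, rfl⟩ : ∃ x m g, l = x :: m ++ [g] := by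
    obtain ⟨x, l', rfl⟩ := List.exists_cons_of_length_pos (Nat.zero_lt_of_lt hlen)
    obtain ⟨m, g, rfl⟩ := (List.eq_nil_or_concat' l').resolve_left (by rintro rfl; simp at hlen)
    exact ⟨x, m, g, rfl⟩
  have hodd : Odd (m.length + 1) := by
    rw [← Nat.not_even_iff_odd, ← Nat.even_add_one]
    simpa using heven
  by_cases px : p x = 1
  · exact hr.exists_altWeakSeq_perm_cons he hu hl px (by simpa using hlen) (by simpa using hodd)
      (hdisj x (by simp))
  · have pxg : p x ≠ p g := by
      rw [Ne, parity_head_eq_parity_last_iff m hl.1]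
      rwa [Nat.odd_add_one] at hodd
    have pg : p g = 1 := by
      generalize p x = a, p g = b at px pxg
      revert a b; decide
    exact hr.exists_altWeakSeq_perm_concat he hu hl pg (by simpa using hlen) (by simpa using hodd)
      (hdisj g (by simp))

end Reserve

section Counting

variable {α : Type*} [DecidableEq α]

theorem card_sdiff_toFinset_of_nodup {S : Finset α} {T : List α} (hT : T.Nodup)
    (hTS : ∀ x ∈ T, x ∈ S) : (S \ T.toFinset).card = S.card - T.length := by
  rw [Finset.card_sdiff_of_subset fun x hx ↦ hTS x (List.mem_toFinset.mp hx),
    List.toFinset_card_of_nodup hT]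

theorem filter_sdiff_toFinset_append {P : α → Prop} [DecidablePred P] (S : Finset α)
    (A : List α) {B : List α} (hB : ∀ x ∈ B, ¬ P x) :
    (S \ (A ++ B).toFinset).filter P = S.filter P \ A.toFinset := by
  ext x
  simp only [Finset.mem_filter, Finset.mem_sdiff, List.mem_toFinset, List.mem_append]
  have := hB x
  tauto

end Counting

section Reduction

variable {G : Type*} [Group G]

theorem IsOrderingOf.length_eq_card {l : List G} {S : Finset G} (h : IsOrderingOf l S) :
    l.length = S.card := by
  classical
  rw [← List.toFinset_card_of_nodup h.1]
  exact congrArg Finset.card (Finset.ext fun x ↦ by rw [List.mem_toFinset, h.2])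

theorem IsOrderingOf.of_perm_append [DecidableEq G] {l L T : List G} {S : Finset G}
    (h : IsOrderingOf l (S \ T.toFinset)) (hT : T.Nodup) (hTS : ∀ x ∈ T, x ∈ S)
    (hL : L.Perm (l ++ T)) : IsOrderingOf L S := by
  have hl (x : G) : x ∈ l ↔ x ∈ S ∧ x ∉ T := by rw [h.2, Finset.mem_sdiff, List.mem_toFinset]
  refine ⟨hL.nodup_iff.mpr (List.nodup_append'.mpr ⟨h.1, hT, fun x hx ↦ ((hl x).mp hx).2⟩),
    fun x ↦ ?_⟩
  rw [hL.mem_iff, List.mem_append, hl]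
  have := hTS x
  tauto

theorem stmt10_general (p : G →* Z2) {n : ℕ} (hn : 9 ≤ n)
    (H : ∀ S : Finset G, 1 ∉ S →
      (S.filter (p · = 1)).card = n - 5 ∧ S.card = (n - 5) + (n - 5) →
      ∃ l, IsOrderingOf l S ∧ AltWeakSeq p l) :
    ∀ S : Finset G, 1 ∉ S → (S.filter (p · = 1)).card = n ∧ S.card = n + n →
      ∃ l, IsOrderingOf l S ∧ AltWeakSeq p l := by
  classical
  rintro S h1 ⟨heven, hcard⟩
  have hodd : (S.filter (¬ p · = 1)).card = n := by
    have := S.card_filter_add_card_filter_not (p · = 1)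
    omega
  obtain ⟨r, hr, hE, hO⟩ := Reserve.exists_isFlexible (heven.symm ▸ hn) (hodd.symm ▸ hn)
    fun h ↦ h1 (Finset.mem_of_mem_filter 1 h)
  have hEcard := card_sdiff_toFinset_of_nodup hr.nodup_evens hE
  simp only [Finset.mem_filter] at hE hO
  have he : ∀ e ∈ r.evens, e ≠ 1 ∧ p e = 1 := fun e h ↦
    ⟨ne_of_mem_of_not_mem (hE e h).1 h1, (hE e h).2⟩
  have hu : ∀ u ∈ r.odds, p u ≠ 1 := fun u h ↦ (hO u h).2
  have hdisj : r.evens.Disjoint r.odds := fun x hx hx' ↦ hu x hx' (he x hx).2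
  have hnodup : (r.evens ++ r.odds).Nodup :=
    List.nodup_append'.mpr ⟨hr.nodup_evens, hr.nodup_odds, hdisj⟩
  have hsub : ∀ x ∈ r.evens ++ r.odds, x ∈ S := fun x hx ↦
    (List.mem_append.mp hx).elim (fun h ↦ (hE x h).1) fun h ↦ (hO x h).1
  have hrest := card_sdiff_toFinset_of_nodup hnodup hsub
  rw [← filter_sdiff_toFinset_append S r.evens hu] at hEcard
  have hlen : r.evens.length = 5 ∧ (r.evens ++ r.odds).length = 10 := ⟨rfl, rfl⟩
  obtain ⟨l, hl, hlseq⟩ := H (S \ (r.evens ++ r.odds).toFinset)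
    (fun h ↦ h1 (Finset.sdiff_subset h)) (by omega)
  have hllen : l.length = (n - 5) + (n - 5) := by rw [hl.length_eq_card]; omega
  obtain ⟨L, hL, hperm⟩ := hr.exists_altWeakSeq_perm he hu hlseq (by omega) ⟨_, hllen⟩
    fun g hg hgr ↦ by simpa [hgr] using (hl.2 g).mp hg
  exact ⟨L, hl.of_perm_append hnodup hsub hperm, hL⟩

end Reduction

/-- Let `N` be a finite group of odd order, `G = N ⋊_φ Z_2`, and let
`k ≥ 18` be even.  If every subset of `G \ {(0,0)}` of type `(k/2-5, k/2-5)` admits an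
alternating parity `4`-weak sequencing, then so does every subset of `G \ {(0,0)}` of
type `(k/2, k/2)`. -/
theorem stmt10 {N : Type*} [Group N] [Finite N] (hodd : Odd (Nat.card N))
    (φ : Z2 →* MulAut N) (k : ℕ) (hke : Even k) (hk18 : 18 ≤ k)
    (H : ∀ S' : Finset (N ⋊[φ] Z2), (1 : N ⋊[φ] Z2) ∉ S' →
      HasType S' (k / 2 - 5) (k / 2 - 5) →
      ∃ l : List (N ⋊[φ] Z2), IsOrderingOf l S' ∧ AltList l ∧ WeakSeqList 4 l) :
    ∀ S : Finset (N ⋊[φ] Z2), (1 : N ⋊[φ] Z2) ∉ S →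
      HasType S (k / 2) (k / 2) →
      ∃ l : List (N ⋊[φ] Z2), IsOrderingOf l S ∧ AltList l ∧ WeakSeqList 4 l := by
  exact stmt10_general SemidirectProduct.rightHom (by omega) H
end
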